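/- There exist constants C > 0 and δ > 0 such that for all integers N ≥ 1, all t ∈ [0,1], and all α with 0 < α ≤ N^{−3/4}: α·∫_{1/(α·N^{2/3})}^{1/α−1} e^{−N·α·𝓕_{t,α}(y)} dy ≤ C·e^{−δ·N^{1/3}}·Q_t^N(α), and the same bound holds with 𝓕_{P,α} and Q_P^N(α) in place of 𝓕_{t,α} and Q_t^N(α). -/

import Mathlib

open Set Filter

noncomputable def GP : ℝ → ℝ := fun x => x * Real.log x + (1 - x) * Real.log (1 - x)

noncomputable def Gt (f0 f1 : ℝ → ℝ) (t : ℝ) : ℝ → ℝ :=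
  fun x => GP x + ((1 - t) * f0 x + t * f1 x)

noncomputable def Phase (G : ℝ → ℝ) (α : ℝ) : ℝ → ℝ :=
  fun x => (x - α) * deriv G x - (G x - G α)

noncomputable def Qnorm (G : ℝ → ℝ) (N : ℕ) (α : ℝ) : ℝ :=
  2 * Real.pi * ∫ x in (0:ℝ)..1, Real.exp (-(N : ℝ) * Phase G α x)

noncomputable def RPhase (G : ℝ → ℝ) (α : ℝ) : ℝ → ℝ :=
  fun y => (1 / α) * Phase G α (α * (1 + y))

noncomputable def Leg (G : ℝ → ℝ) (S : Set ℝ) : ℝ → ℝ :=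
  fun ρ => sSup ((fun x => x * ρ - G x) '' S)

noncomputable def QQ (G : ℝ → ℝ) (N : ℕ) (α : ℝ) : ℝ :=
  Qnorm G N α * Real.exp ((N : ℝ) * G α)

/-!
The phase `Phase G α x = G α - G x - (α - x) G' x` is the Bregman divergence of `G`: it is linear in
`G` and nonnegative when `G` is convex, hence monotone in the Hessian of `G`. Since
`x (1 - x) Gₜ''` is bounded above and below by positive constants, uniformly in `t`, all the phases
are comparable to that of `GP`, which is the relative entropy of Bernoulli(`α`) with respect to
Bernoulli(`x`). For `α ≤ h` and `x ≥ α + h` this entropy is at least `h / 4`, so with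
`h = N ^ (-2/3)` the rescaled tail integral is at most `exp (-c N ^ (1/3) / 4)`. On
`[α, α + 1 / (4N)]` the phase is `O(1 / N)`, so the norming constant is at least of order `1 / N`;
half of the exponent absorbs the factor `N`.
-/

/-- The potential `G` has the boundary behaviour of the canonical potential `GP`, quantitatively:
it is `C²` on `(0, 1)` and `c * GP'' ≤ G'' ≤ K * GP''` there. The bounds are stated relative to
`GP''` because it is the comparison of Hessians that passes to the phases. -/
structure HasPinchedHessian (G : ℝ → ℝ) (c K : ℝ) : Prop where
  contDiffOn : ContDiffOn ℝ 2 G (Ioo 0 1)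
  le_hessian : ∀ x ∈ Ioo (0 : ℝ) 1, c * iteratedDeriv 2 GP x ≤ iteratedDeriv 2 G x
  hessian_le : ∀ x ∈ Ioo (0 : ℝ) 1, iteratedDeriv 2 G x ≤ K * iteratedDeriv 2 GP x

section Phase

variable {G H : ℝ → ℝ} {s : Set ℝ} {α x : ℝ}

lemma phase_sub (hG : DifferentiableAt ℝ G x) (hH : DifferentiableAt ℝ H x) :
    Phase (G - H) α x = Phase G α x - Phase H α x := by
  simp only [Phase, deriv_sub hG hH, Pi.sub_apply]
  ring

lemma phase_const_mul (c : ℝ) : Phase (fun x => c * G x) α x = c * Phase G α x := by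
  simp only [Phase, deriv_const_mul_field]
  ring

lemma phase_nonneg_of_convexOn (hG : ConvexOn ℝ s G) (hα : α ∈ s) (hx : x ∈ s)
    (hGx : DifferentiableAt ℝ G x) : 0 ≤ Phase G α x := by
  simp only [Phase, sub_nonneg]
  rcases lt_trichotomy α x with h | rfl | h
  · have := hG.slope_le_deriv hα hx h hGx
    rw [slope_def_field, div_le_iff₀ (sub_pos.2 h)] at this
    linarith
  · simp
  · have := hG.deriv_le_slope hx hα h hGx
    rw [slope_def_field, le_div_iff₀ (sub_pos.2 h)] at this
    linarith

lemma continuousOn_phase (hG : ContDiffOn ℝ 2 G s) (hs : IsOpen s) :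
    ContinuousOn (Phase G α) s := by
  have := hG.continuousOn_deriv_of_isOpen hs one_le_two
  have := hG.continuousOn
  unfold Phase
  fun_prop

lemma phase_le_phase_of_iteratedDeriv_two_le (hs : IsOpen s) (hs' : Convex ℝ s)
    (hH : ContDiffOn ℝ 2 H s) (hG : ContDiffOn ℝ 2 G s)
    (hHG : ∀ x ∈ s, iteratedDeriv 2 H x ≤ iteratedDeriv 2 G x) (hα : α ∈ s) (hx : x ∈ s) :
    Phase H α x ≤ Phase G α x := by
  have hGH := hG.sub hH
  have hGH_deriv : DifferentiableOn ℝ (deriv (G - H)) s :=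
    ((contDiffOn_succ_iff_deriv_of_isOpen (n := 1) hs).1 hGH).2.2.differentiableOn one_ne_zero
  have hconv : ConvexOn ℝ s (G - H) := by
    refine convexOn_of_deriv2_nonneg' hs' (hGH.differentiableOn two_ne_zero) hGH_deriv
      fun y hy => ?_
    rw [← iteratedDeriv_eq_iterate, iteratedDeriv_sub (hG.contDiffAt (hs.mem_nhds hy))
      (hH.contDiffAt (hs.mem_nhds hy))]
    exact sub_nonneg.2 (hHG y hy)
  have hGx := (hG.differentiableOn two_ne_zero).differentiableAt (hs.mem_nhds hx)
  have hHx := (hH.differentiableOn two_ne_zero).differentiableAt (hs.mem_nhds hx)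
  have := phase_nonneg_of_convexOn hconv hα hx (hGx.sub hHx)
  rwa [phase_sub hGx hHx, sub_nonneg] at this

lemma mul_integral_exp_rphase (hα : α ≠ 0) (N a b : ℝ) :
    α * ∫ y in a..b, Real.exp (-(N * α) * RPhase G α y) =
      ∫ x in (α + α * a)..(α + α * b), Real.exp (-N * Phase G α x) := by
  rw [← intervalIntegral.mul_integral_comp_add_mul]
  congr 2 with y
  rw [RPhase, mul_one_add]
  field_simp

lemma mul_integral_exp_rphase_tail (hα : α ≠ 0) (N M : ℝ) :
    α * ∫ y in (1 / (α * M))..(1 / α - 1), Real.exp (-(N * α) * RPhase G α y) =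
      ∫ x in (α + M⁻¹)..1, Real.exp (-N * Phase G α x) := by
  have hlower : α + α * (1 / (α * M)) = α + M⁻¹ := by field_simp
  have hupper : α + α * (1 / α - 1) = 1 := by field_simp; ring
  rw [mul_integral_exp_rphase hα, hlower, hupper]

lemma integral_exp_phase_nonneg (N : ℝ) {a b : ℝ} (hab : a ≤ b) :
    0 ≤ ∫ x in a..b, Real.exp (-N * Phase G α x) :=
  intervalIntegral.integral_nonneg hab fun _ _ => (Real.exp_pos _).le

lemma integral_exp_phase_le_qnorm (N : ℕ) :
    ∫ x in (0 : ℝ)..1, Real.exp (-N * Phase G α x) ≤ Qnorm G N α :=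
  le_mul_of_one_le_left (integral_exp_phase_nonneg N zero_le_one)
    (by linarith [Real.pi_gt_three])

end Phase

section CanonicalPotential

variable {α x : ℝ}

lemma GP_eq_neg_binEntropy : GP = -Real.binEntropy := by
  funext x
  simp only [GP, Pi.neg_apply, Real.binEntropy, Real.log_inv]
  ring

lemma deriv_GP : deriv GP x = Real.log x - Real.log (1 - x) := by
  rw [GP_eq_neg_binEntropy, deriv.neg, Real.deriv_binEntropy, neg_sub]

lemma iteratedDeriv_two_GP : iteratedDeriv 2 GP x = 1 / (x * (1 - x)) := by
  rw [GP_eq_neg_binEntropy, iteratedDeriv_neg, iteratedDeriv_eq_iterate, Real.deriv2_binEntropy]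
  ring

lemma iteratedDeriv_two_GP_pos (hx : x ∈ Ioo (0 : ℝ) 1) : 0 < iteratedDeriv 2 GP x := by
  rw [iteratedDeriv_two_GP]
  exact one_div_pos.2 (mul_pos hx.1 (sub_pos.2 hx.2))

lemma contDiffOn_GP {n : WithTop ℕ∞} : ContDiffOn ℝ n GP (Ioo 0 1) := by
  have hlog : ContDiffOn ℝ n (fun x : ℝ => Real.log x) (Ioo 0 1) :=
    contDiffOn_id.log fun x hx => hx.1.ne'
  have hlog' : ContDiffOn ℝ n (fun x : ℝ => Real.log (1 - x)) (Ioo 0 1) :=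
    (contDiffOn_const.sub contDiffOn_id).log fun x hx => (sub_pos.2 hx.2).ne'
  unfold GP
  fun_prop

lemma phase_GP (hα : α ∈ Ioo (0 : ℝ) 1) (hx : x ∈ Ioo (0 : ℝ) 1) :
    Phase GP α x = α * Real.log (α / x) + (1 - α) * Real.log ((1 - α) / (1 - x)) := by
  rw [Phase, deriv_GP, Real.log_div hα.1.ne' hx.1.ne',
    Real.log_div (sub_pos.2 hα.2).ne' (sub_pos.2 hx.2).ne']
  simp only [GP]
  ring

lemma sub_le_mul_log_div {a b : ℝ} (ha : 0 < a) (hb : 0 < b) : a - b ≤ a * Real.log (a / b) := by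
  calc a - b = a * (1 - (a / b)⁻¹) := by field_simp
    _ ≤ a * Real.log (a / b) := by gcongr; exact Real.one_sub_inv_le_log_of_pos (div_pos ha hb)

lemma log_le_half_sub_inv {s : ℝ} (hs : 1 ≤ s) : Real.log s ≤ (s - s⁻¹) / 2 := by
  rw [← Real.sinh_log (one_pos.trans_le hs), Real.self_le_sinh_iff]
  exact Real.log_nonneg hs

lemma phase_GP_nonneg (hα : α ∈ Ioo (0 : ℝ) 1) (hx : x ∈ Ioo (0 : ℝ) 1) : 0 ≤ Phase GP α x := by
  rw [phase_GP hα hx]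
  linarith [sub_le_mul_log_div hα.1 hx.1, sub_le_mul_log_div (sub_pos.2 hα.2) (sub_pos.2 hx.2)]

lemma sq_div_le_phase_GP (hα : 0 < α) (hαx : α ≤ x) (hx : x < 1) :
    (x - α) ^ 2 / (2 * x) ≤ Phase GP α x := by
  have hx₀ : 0 < x := hα.trans_le hαx
  have hα₁ : α < 1 := hαx.trans_lt hx
  have hlog : -((x ^ 2 - α ^ 2) / (2 * x)) ≤ α * Real.log (α / x) := by
    calc -((x ^ 2 - α ^ 2) / (2 * x)) = -(α * ((x / α - (x / α)⁻¹) / 2)) := by field_simp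
      _ ≤ -(α * Real.log (x / α)) := by
        gcongr
        exact log_le_half_sub_inv ((one_le_div hα).2 hαx)
      _ = α * Real.log (α / x) := by rw [← inv_div x α, Real.log_inv, mul_neg]
  have hlog' := sub_le_mul_log_div (sub_pos.2 hα₁) (sub_pos.2 hx)
  calc (x - α) ^ 2 / (2 * x) = -((x ^ 2 - α ^ 2) / (2 * x)) + (1 - α - (1 - x)) := by
        field_simp
        ring
    _ ≤ Phase GP α x := by
        rw [phase_GP ⟨hα, hα₁⟩ ⟨hx₀, hx⟩]
        exact add_le_add hlog hlog'

lemma phase_GP_le_div (hα : 0 < α) (hαx : α ≤ x) (hx : x < 1) :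
    Phase GP α x ≤ (x - α) / (1 - x) := by
  have hx₀ : 0 < x := hα.trans_le hαx
  have hα₁ : 0 < 1 - α := sub_pos.2 (hαx.trans_lt hx)
  have hx₁ : 0 < 1 - x := sub_pos.2 hx
  have hlog : Real.log (α / x) ≤ 0 := Real.log_nonpos (by positivity) ((div_le_one hx₀).2 hαx)
  have hlog' : Real.log ((1 - α) / (1 - x)) ≤ (x - α) / (1 - x) :=
    (Real.log_le_sub_one_of_pos (div_pos hα₁ hx₁)).trans_eq (by field_simp; ring)
  calc Phase GP α x = α * Real.log (α / x) + (1 - α) * Real.log ((1 - α) / (1 - x)) :=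
        phase_GP ⟨hα, sub_pos.1 hα₁⟩ ⟨hx₀, hx⟩
    _ ≤ 0 + 1 * ((x - α) / (1 - x)) :=
        add_le_add (mul_nonpos_of_nonneg_of_nonpos hα.le hlog)
          (mul_le_mul (by linarith) hlog'
            (Real.log_nonneg ((one_le_div hx₁).2 (by linarith))) zero_le_one)
    _ = (x - α) / (1 - x) := by ring

lemma hasPinchedHessian_GP : HasPinchedHessian GP 1 1 where
  contDiffOn := contDiffOn_GP
  le_hessian _ _ := (one_mul _).le
  hessian_le _ _ := (one_mul _).ge

lemma iteratedDeriv_two_GP_add {f : ℝ → ℝ} (hf : ContDiffAt ℝ 2 f x)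
    (hx : x ∈ Ioo (0 : ℝ) 1) :
    iteratedDeriv 2 (GP + f) x =
      (1 + x * (1 - x) * iteratedDeriv 2 f x) * iteratedDeriv 2 GP x := by
  have hx₀ : x ≠ 0 := hx.1.ne'
  have hx₁ : 1 - x ≠ 0 := (sub_pos.2 hx.2).ne'
  rw [iteratedDeriv_add (contDiffOn_GP.contDiffAt (isOpen_Ioo.mem_nhds hx)) hf,
    iteratedDeriv_two_GP]
  field_simp

end CanonicalPotential

namespace HasPinchedHessian

variable {G H : ℝ → ℝ} {c K α x : ℝ}

lemma mono {c' K' : ℝ} (hG : HasPinchedHessian G c K) (hc : c' ≤ c) (hK : K ≤ K') :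
    HasPinchedHessian G c' K' where
  contDiffOn := hG.contDiffOn
  le_hessian x hx :=
    (mul_le_mul_of_nonneg_right hc (iteratedDeriv_two_GP_pos hx).le).trans (hG.le_hessian x hx)
  hessian_le x hx :=
    (hG.hessian_le x hx).trans (mul_le_mul_of_nonneg_right hK (iteratedDeriv_two_GP_pos hx).le)

lemma convexCombination (hG : HasPinchedHessian G c K) (hH : HasPinchedHessian H c K) {t : ℝ}
    (ht : t ∈ Icc (0 : ℝ) 1) : HasPinchedHessian (fun x => (1 - t) * G x + t * H x) c K := by
  have hHess : ∀ x ∈ Ioo (0 : ℝ) 1, iteratedDeriv 2 (fun x => (1 - t) * G x + t * H x) x =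
      (1 - t) * iteratedDeriv 2 G x + t * iteratedDeriv 2 H x := fun x hx => by
    have hGx := hG.contDiffOn.contDiffAt (isOpen_Ioo.mem_nhds hx)
    have hHx := hH.contDiffOn.contDiffAt (isOpen_Ioo.mem_nhds hx)
    rw [iteratedDeriv_fun_add (contDiffAt_const.mul hGx) (contDiffAt_const.mul hHx),
      iteratedDeriv_const_mul_field, iteratedDeriv_const_mul_field]
  have ht₀ := ht.1
  have ht₁ := sub_nonneg.2 ht.2
  refine ⟨(contDiffOn_const.mul hG.contDiffOn).add (contDiffOn_const.mul hH.contDiffOn),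
    fun x hx => ?_, fun x hx => ?_⟩ <;> rw [hHess x hx]
  · linear_combination (1 - t) * hG.le_hessian x hx + t * hH.le_hessian x hx
  · linear_combination (1 - t) * hG.hessian_le x hx + t * hH.hessian_le x hx

lemma le (hG : HasPinchedHessian G c K) : c ≤ K := by
  have hmid : (1 / 2 : ℝ) ∈ Ioo (0 : ℝ) 1 := by norm_num
  exact le_of_mul_le_mul_right ((hG.le_hessian _ hmid).trans (hG.hessian_le _ hmid))
    (iteratedDeriv_two_GP_pos hmid)

lemma mul_phase_GP_le (hG : HasPinchedHessian G c K) (hα : α ∈ Ioo (0 : ℝ) 1)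
    (hx : x ∈ Ioo (0 : ℝ) 1) : c * Phase GP α x ≤ Phase G α x := by
  rw [← phase_const_mul]
  refine phase_le_phase_of_iteratedDeriv_two_le isOpen_Ioo (convex_Ioo 0 1)
    (contDiffOn_const.mul contDiffOn_GP) hG.contDiffOn (fun y hy => ?_) hα hx
  rw [iteratedDeriv_const_mul_field]
  exact hG.le_hessian y hy

lemma phase_le_mul_phase_GP (hG : HasPinchedHessian G c K) (hα : α ∈ Ioo (0 : ℝ) 1)
    (hx : x ∈ Ioo (0 : ℝ) 1) : Phase G α x ≤ K * Phase GP α x := by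
  rw [← phase_const_mul]
  refine phase_le_phase_of_iteratedDeriv_two_le isOpen_Ioo (convex_Ioo 0 1) hG.contDiffOn
    (contDiffOn_const.mul contDiffOn_GP) (fun y hy => ?_) hα hx
  rw [iteratedDeriv_const_mul_field]
  exact hG.hessian_le y hy

lemma phase_nonneg (hG : HasPinchedHessian G c K) (hc : 0 ≤ c) (hα : α ∈ Ioo (0 : ℝ) 1)
    (hx : x ∈ Ioo (0 : ℝ) 1) : 0 ≤ Phase G α x :=
  (mul_nonneg hc (phase_GP_nonneg hα hx)).trans (hG.mul_phase_GP_le hα hx)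

lemma intervalIntegrable_exp_phase (hG : HasPinchedHessian G c K) (hc : 0 ≤ c)
    (hα : α ∈ Ioo (0 : ℝ) 1) {N : ℝ} (hN : 0 ≤ N) :
    IntervalIntegrable (fun x => Real.exp (-N * Phase G α x)) MeasureTheory.volume 0 1 := by
  rw [intervalIntegrable_iff_integrableOn_Ioo_of_le zero_le_one]
  have hcont : ContinuousOn (fun x => Real.exp (-N * Phase G α x)) (Ioo 0 1) :=
    ((continuousOn_phase hG.contDiffOn isOpen_Ioo).const_mul (-N)).rexp
  refine MeasureTheory.IntegrableOn.of_bound (C := 1) measure_Ioo_lt_top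
    (hcont.aestronglyMeasurable measurableSet_Ioo) ?_
  filter_upwards [MeasureTheory.ae_restrict_mem measurableSet_Ioo] with x hx
  rw [Real.norm_of_nonneg (Real.exp_pos _).le, Real.exp_le_one_iff, neg_mul, neg_nonpos]
  exact mul_nonneg hN (hG.phase_nonneg hc hα hx)

lemma tail_integral_exp_phase_le (hG : HasPinchedHessian G c K) (hc : 0 ≤ c) {N h : ℝ}
    (hN : 0 ≤ N) (hα : 0 < α) (hαh : α ≤ h) (hh : α + h ≤ 1) :
    ∫ x in (α + h)..1, Real.exp (-N * Phase G α x) ≤ Real.exp (-(c * N * h / 4)) := by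
  have hα' : α ∈ Ioo (0 : ℝ) 1 := ⟨hα, by linarith⟩
  have hphase : ∀ x ∈ Ioo (α + h) 1, c * h / 4 ≤ Phase G α x := by
    rintro x ⟨hhx, hx⟩
    have hx₀ : 0 < x := by linarith
    calc c * h / 4 = c * (h / 4) := by ring
      _ ≤ c * ((x - α) ^ 2 / (2 * x)) := by
        refine mul_le_mul_of_nonneg_left ?_ hc
        rw [div_le_div_iff₀ (by norm_num) (by positivity)]
        nlinarith
      _ ≤ c * Phase GP α x := by gcongr; exact sq_div_le_phase_GP hα (by linarith) hx
      _ ≤ Phase G α x := hG.mul_phase_GP_le hα' ⟨hx₀, hx⟩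
  have hint := (hG.intervalIntegrable_exp_phase hc hα' hN).mono_set
    (c := α + h) (d := 1) (by
      rw [uIcc_of_le hh, uIcc_of_le zero_le_one]
      exact Icc_subset_Icc_left (by linarith))
  calc ∫ x in (α + h)..1, Real.exp (-N * Phase G α x)
      ≤ ∫ _ in (α + h)..1, Real.exp (-(c * N * h / 4)) := by
        refine intervalIntegral.integral_mono_on_of_le_Ioo hh hint
          intervalIntegrable_const fun x hx => Real.exp_le_exp.2 ?_
        linear_combination N * hphase x hx
    _ = (1 - (α + h)) * Real.exp (-(c * N * h / 4)) := by
        rw [intervalIntegral.integral_const, smul_eq_mul]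
    _ ≤ Real.exp (-(c * N * h / 4)) :=
        mul_le_of_le_one_left (Real.exp_pos _).le (by linarith)

lemma exp_neg_div_le_integral_exp_phase (hG : HasPinchedHessian G c K) (hc : 0 ≤ c) {N : ℝ}
    (hN : 1 ≤ N) (hα : 0 < α) (hα' : α ≤ 1 / 2) :
    Real.exp (-K) / (4 * N) ≤ ∫ x in (0 : ℝ)..1, Real.exp (-N * Phase G α x) := by
  have hN₀ : 0 < N := one_pos.trans_le hN
  have hK : 0 ≤ K := hc.trans hG.le
  have hα_mem : α ∈ Ioo (0 : ℝ) 1 := ⟨hα, by linarith⟩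
  set w : ℝ := 1 / (4 * N) with hw
  have hw₀ : 0 < w := by positivity
  have hw₁ : w ≤ 1 / 4 := one_div_le_one_div_of_le (by norm_num) (by linarith)
  have hphase : ∀ x ∈ Icc α (α + w), N * Phase G α x ≤ K := by
    rintro x ⟨hαx, hxw⟩
    have hx : x < 1 := by linarith
    calc N * Phase G α x ≤ N * (K * Phase GP α x) := by
          gcongr
          exact hG.phase_le_mul_phase_GP hα_mem ⟨hα.trans_le hαx, hx⟩
      _ ≤ N * (K * ((x - α) / (1 - x))) := by gcongr; exact phase_GP_le_div hα hαx hx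
      _ ≤ N * (K * (w / (1 / 4))) := by gcongr <;> linarith
      _ = K := by rw [hw]; field_simp
  have hint := hG.intervalIntegrable_exp_phase hc hα_mem hN₀.le
  have hint' := hint.mono_set (c := α) (d := α + w) (by
    rw [uIcc_of_le (by linarith), uIcc_of_le zero_le_one]
    exact Icc_subset_Icc hα.le (by linarith))
  calc Real.exp (-K) / (4 * N) = ∫ _ in α..(α + w), Real.exp (-K) := by
        rw [intervalIntegral.integral_const, smul_eq_mul, hw]
        ring
    _ ≤ ∫ x in α..(α + w), Real.exp (-N * Phase G α x) := by
        refine intervalIntegral.integral_mono_on (by linarith) intervalIntegrable_const hint'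
          fun x hx => Real.exp_le_exp.2 ?_
        linarith [hphase x hx]
    _ ≤ ∫ x in (0 : ℝ)..1, Real.exp (-N * Phase G α x) :=
        intervalIntegral.integral_mono_interval hα.le (by linarith) (by linarith)
          (Eventually.of_forall fun _ => (Real.exp_pos _).le) hint

lemma tail_integral_exp_phase_le_mul_integral (hG : HasPinchedHessian G c K) (hc : 0 ≤ c)
    {N h : ℝ} (hN : 1 ≤ N) (hα : 0 < α) (hαh : α ≤ h) :
    ∫ x in (α + h)..1, Real.exp (-N * Phase G α x) ≤
      4 * N * Real.exp K * Real.exp (-(c * N * h / 4)) *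
        ∫ x in (0 : ℝ)..1, Real.exp (-N * Phase G α x) := by
  have hN₀ : 0 < N := one_pos.trans_le hN
  rcases le_total 1 (α + h) with hh | hh
  · rw [intervalIntegral.integral_symm]
    have htail := integral_exp_phase_nonneg (G := G) (α := α) N hh
    have htotal := integral_exp_phase_nonneg (G := G) (α := α) N zero_le_one
    exact (neg_nonpos.2 htail).trans (by positivity)
  · calc ∫ x in (α + h)..1, Real.exp (-N * Phase G α x)
        ≤ Real.exp (-(c * N * h / 4)) := hG.tail_integral_exp_phase_le hc hN₀.le hα hαh hh
      _ = 4 * N * Real.exp K * Real.exp (-(c * N * h / 4)) * (Real.exp (-K) / (4 * N)) := by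
          rw [Real.exp_neg K]
          field_simp
      _ ≤ _ := by
          gcongr
          exact hG.exp_neg_div_le_integral_exp_phase hc hN hα (by linarith)

end HasPinchedHessian

lemma pow_mul_exp_neg_mul_le {a z : ℝ} (ha : 0 < a) (hz : 0 ≤ z) (n : ℕ) :
    z ^ n * Real.exp (-(a * z)) ≤ n.factorial / a ^ n := by
  have hexp := Real.pow_div_factorial_le_exp (a * z) (by positivity) n
  rw [Real.exp_neg, ← div_eq_mul_inv, div_le_div_iff₀ (Real.exp_pos _) (by positivity)]
  rw [div_le_iff₀ (by positivity)] at hexp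
  linear_combination hexp

theorem exists_boundary_localization_bound {c : ℝ} (hc : 0 < c) (K : ℝ) :
    ∃ C : ℝ, 0 < C ∧ ∀ G, HasPinchedHessian G c K → ∀ N : ℕ, 1 ≤ N → ∀ α : ℝ,
      0 < α → α ≤ (N : ℝ) ^ (-(2 : ℝ) / 3) →
      α * ∫ y in (1 / (α * (N : ℝ) ^ ((2 : ℝ) / 3)))..(1 / α - 1),
          Real.exp (-((N : ℝ) * α) * RPhase G α y) ≤
        C * Real.exp (-(c / 8) * (N : ℝ) ^ ((1 : ℝ) / 3)) * Qnorm G N α := by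
  refine ⟨4 * Real.exp K * (Nat.factorial 3 / (c / 8) ^ 3), by positivity, ?_⟩
  intro G hG N hN α hα hαN
  have hN₁ : (1 : ℝ) ≤ N := by exact_mod_cast hN
  set z : ℝ := (N : ℝ) ^ ((1 : ℝ) / 3) with hz
  have hz₀ : 0 < z := Real.rpow_pos_of_pos (by linarith) _
  have hz₂ : (N : ℝ) ^ ((2 : ℝ) / 3) = z ^ 2 := by
    rw [hz, ← Real.rpow_mul_natCast N.cast_nonneg]
    norm_num
  have hz₃ : (N : ℝ) = z ^ 3 := by
    rw [hz, ← Real.rpow_mul_natCast N.cast_nonneg]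
    norm_num
  have hαz : α ≤ (z ^ 2)⁻¹ := by
    rwa [← hz₂, ← Real.rpow_neg N.cast_nonneg, ← neg_div]
  have hscale : c * N * (z ^ 2)⁻¹ / 4 = c / 8 * z + c / 8 * z := by
    rw [hz₃]
    field_simp
    ring
  rw [hz₂, mul_integral_exp_rphase_tail hα.ne']
  calc ∫ x in (α + (z ^ 2)⁻¹)..1, Real.exp (-N * Phase G α x)
      ≤ 4 * N * Real.exp K * Real.exp (-(c * N * (z ^ 2)⁻¹ / 4)) *
          ∫ x in (0 : ℝ)..1, Real.exp (-N * Phase G α x) :=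
        hG.tail_integral_exp_phase_le_mul_integral hc.le hN₁ hα hαz
    _ = 4 * Real.exp K * (z ^ 3 * Real.exp (-(c / 8 * z))) * Real.exp (-(c / 8) * z) *
          ∫ x in (0 : ℝ)..1, Real.exp (-N * Phase G α x) := by
        rw [hscale, neg_add, Real.exp_add, ← hz₃, neg_mul]
        ring
    _ ≤ 4 * Real.exp K * (Nat.factorial 3 / (c / 8) ^ 3) * Real.exp (-(c / 8) * z) *
          Qnorm G N α := by
        gcongr
        · exact integral_exp_phase_nonneg N zero_le_one
        · exact pow_mul_exp_neg_mul_le (by positivity) hz₀.le 3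
        · exact integral_exp_phase_le_qnorm N

-- `x (1 - x) (GP + f)'' = 1 + x (1 - x) f''` extends continuously to `[0, 1]`, with value `1` at
-- both endpoints, so positivity inside gives uniform bounds by compactness.
theorem exists_hasPinchedHessian {f : ℝ → ℝ} (hf : ContDiffOn ℝ 2 f (Icc 0 1))
    (hpos : ∀ x ∈ Ioo (0 : ℝ) 1, 0 < iteratedDeriv 2 (GP + f) x) :
    ∃ c > 0, ∃ K, HasPinchedHessian (GP + f) c K := by
  have hHess : ∀ x ∈ Ioo (0 : ℝ) 1, iteratedDeriv 2 (GP + f) x =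
      (1 + x * (1 - x) * iteratedDerivWithin 2 f (Icc 0 1) x) * iteratedDeriv 2 GP x := by
    intro x hx
    have hfx : ContDiffAt ℝ 2 f x := hf.contDiffAt (Icc_mem_nhds hx.1 hx.2)
    rw [iteratedDeriv_two_GP_add hfx hx,
      iteratedDerivWithin_eq_iteratedDeriv (uniqueDiffOn_Icc zero_lt_one) hfx
        (Ioo_subset_Icc_self hx)]
  set ratio : ℝ → ℝ := fun x => 1 + x * (1 - x) * iteratedDerivWithin 2 f (Icc 0 1) x with hratio
  have hcont : ContinuousOn ratio (Icc 0 1) := by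
    have := hf.continuousOn_iteratedDerivWithin (m := 2) le_rfl (uniqueDiffOn_Icc zero_lt_one)
    fun_prop
  have hratio_pos : ∀ x ∈ Icc (0 : ℝ) 1, 0 < ratio x := by
    intro x hx
    rcases hx.1.eq_or_lt with rfl | hx₀
    · simp [hratio]
    rcases hx.2.eq_or_lt with rfl | hx₁
    · simp [hratio]
    have := hpos x ⟨hx₀, hx₁⟩
    rw [hHess x ⟨hx₀, hx₁⟩] at this
    exact pos_of_mul_pos_left this (iteratedDeriv_two_GP_pos ⟨hx₀, hx₁⟩).le
  obtain ⟨a, ha, hmin⟩ := isCompact_Icc.exists_isMinOn (nonempty_Icc.2 zero_le_one) hcont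
  obtain ⟨b, -, hmax⟩ := isCompact_Icc.exists_isMaxOn (nonempty_Icc.2 zero_le_one) hcont
  refine ⟨ratio a, hratio_pos a ha, ratio b,
    contDiffOn_GP.add (hf.mono Ioo_subset_Icc_self), fun x hx => ?_, fun x hx => ?_⟩ <;>
    rw [hHess x hx] <;> gcongr
  · exact (iteratedDeriv_two_GP_pos hx).le
  · exact hmin (Ioo_subset_Icc_self hx)
  · exact (iteratedDeriv_two_GP_pos hx).le
  · exact hmax (Ioo_subset_Icc_self hx)

theorem exists_uniform_hasPinchedHessian {f0 f1 : ℝ → ℝ}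
    (hf0 : ContDiffOn ℝ 2 f0 (Icc 0 1)) (hf1 : ContDiffOn ℝ 2 f1 (Icc 0 1))
    (hG0 : ∀ x ∈ Ioo (0 : ℝ) 1, 0 < iteratedDeriv 2 (Gt f0 f1 0) x)
    (hG1 : ∀ x ∈ Ioo (0 : ℝ) 1, 0 < iteratedDeriv 2 (Gt f0 f1 1) x) :
    ∃ c > 0, ∃ K, HasPinchedHessian GP c K ∧
      ∀ t ∈ Icc (0 : ℝ) 1, HasPinchedHessian (Gt f0 f1 t) c K := by
  have hGt0 : Gt f0 f1 0 = GP + f0 := by funext x; simp [Gt]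
  have hGt1 : Gt f0 f1 1 = GP + f1 := by funext x; simp [Gt]
  obtain ⟨c0, hc0, K0, h0⟩ := exists_hasPinchedHessian hf0 (hGt0 ▸ hG0)
  obtain ⟨c1, hc1, K1, h1⟩ := exists_hasPinchedHessian hf1 (hGt1 ▸ hG1)
  refine ⟨min 1 (min c0 c1), by positivity, max 1 (max K0 K1),
    hasPinchedHessian_GP.mono (by simp) (by simp), fun t ht => ?_⟩
  have hGt : Gt f0 f1 t = fun x => (1 - t) * (GP + f0) x + t * (GP + f1) x := by
    funext x
    simp only [Gt, Pi.add_apply]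
    ring
  rw [hGt]
  exact (h0.mono (by simp) (by simp)).convexCombination (h1.mono (by simp) (by simp)) ht

theorem bergman_cp1_boundary_localization_general
    (f0 f1 : ℝ → ℝ) (hf0 : ContDiffOn ℝ 2 f0 (Icc 0 1)) (hf1 : ContDiffOn ℝ 2 f1 (Icc 0 1))
    (hG0 : ∀ x ∈ Ioo (0 : ℝ) 1, 0 < iteratedDeriv 2 (Gt f0 f1 0) x)
    (hG1 : ∀ x ∈ Ioo (0 : ℝ) 1, 0 < iteratedDeriv 2 (Gt f0 f1 1) x) :
    ∃ C : ℝ, 0 < C ∧ ∃ δ : ℝ, 0 < δ ∧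
      ∀ N : ℕ, 1 ≤ N → ∀ t ∈ Icc (0 : ℝ) 1, ∀ α : ℝ,
        0 < α → α ≤ (N : ℝ) ^ (-(2 : ℝ) / 3) →
        (α * ∫ y in (1 / (α * (N : ℝ) ^ ((2 : ℝ) / 3)))..(1 / α - 1),
            Real.exp (-((N : ℝ) * α) * RPhase (Gt f0 f1 t) α y)
          ≤ C * Real.exp (-δ * (N : ℝ) ^ ((1 : ℝ) / 3)) * Qnorm (Gt f0 f1 t) N α) ∧
        (α * ∫ y in (1 / (α * (N : ℝ) ^ ((2 : ℝ) / 3)))..(1 / α - 1),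
            Real.exp (-((N : ℝ) * α) * RPhase GP α y)
          ≤ C * Real.exp (-δ * (N : ℝ) ^ ((1 : ℝ) / 3)) * Qnorm GP N α) := by
  obtain ⟨c, hc, K, hGP, hGt⟩ := exists_uniform_hasPinchedHessian hf0 hf1 hG0 hG1
  obtain ⟨C, hC, hbound⟩ := exists_boundary_localization_bound hc K
  exact ⟨C, hC, c / 8, by positivity, fun N hN t ht α hα hαN =>
    ⟨hbound _ (hGt t ht) N hN α hα hαN, hbound _ hGP N hN α hα hαN⟩⟩

theorem bergman_cp1_boundary_localization
    (f0 f1 : ℝ → ℝ) (hf0 : ContDiff ℝ (⊤ : ℕ∞) f0) (hf1 : ContDiff ℝ (⊤ : ℕ∞) f1)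
    (hG0 : ∀ x ∈ Set.Ioo (0:ℝ) 1, 0 < iteratedDeriv 2 (Gt f0 f1 0) x)
    (hG1 : ∀ x ∈ Set.Ioo (0:ℝ) 1, 0 < iteratedDeriv 2 (Gt f0 f1 1) x) :
    ∃ C : ℝ, 0 < C ∧ ∃ δ : ℝ, 0 < δ ∧
      ∀ N : ℕ, 1 ≤ N → ∀ t ∈ Set.Icc (0:ℝ) 1, ∀ α : ℝ,
        0 < α → α ≤ (N : ℝ) ^ (-(3:ℝ)/4) →
        (α * ∫ y in (1 / (α * (N:ℝ) ^ ((2:ℝ)/3)))..(1 / α - 1),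
            Real.exp (-((N:ℝ) * α) * RPhase (Gt f0 f1 t) α y)
          ≤ C * Real.exp (-δ * (N:ℝ) ^ ((1:ℝ)/3)) * Qnorm (Gt f0 f1 t) N α) ∧
        (α * ∫ y in (1 / (α * (N:ℝ) ^ ((2:ℝ)/3)))..(1 / α - 1),
            Real.exp (-((N:ℝ) * α) * RPhase GP α y)
          ≤ C * Real.exp (-δ * (N:ℝ) ^ ((1:ℝ)/3)) * Qnorm GP N α) := by
  obtain ⟨C, hC, δ, hδ, hbound⟩ := bergman_cp1_boundary_localization_general f0 f1
    (contDiff_infty.1 hf0 2).contDiffOn (contDiff_infty.1 hf1 2).contDiffOn hG0 hG1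
  exact ⟨C, hC, δ, hδ, fun N hN t ht α hα hαN => hbound N hN t ht α hα
    (hαN.trans (Real.rpow_le_rpow_of_exponent_le (by exact_mod_cast hN) (by norm_num)))⟩
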